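/- arXiv:2601.22297 — 3 statements merged into one kernel-verified Lean document; each statement's English description precedes it below -/
import Mathlib

section
/- Let (Ω, F, P) be a probability space with a filtration F_0 ⊆ F_1 ⊆ … ⊆ F_T, and let p_0, p_1, …, p_T be an adapted sequence of random variables with values in [0,1]. Let S₀ > 0, C > 0 and μ ≥ 0 be real constants, and suppose that for every t ∈ {1, …, T}, almost surely E[p_t | F_{t−1}] ≥ p_{t−1} + μ/(S₀ + t·C). Then E[p_T] ≥ E[p_0] + μ · ∑_{t=1}^{T} 1/(S₀ + t·C) ≥ E[p_0] + (μ/C) · log((S₀ + (T+1)·C)/(S₀ + C)). -/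
open MeasureTheory Finset

/-!
Both inequalities telescope. Integrating the drift bound removes the conditioning and bounds each
increment `E[p_{t+1}] - E[p_t]` below by the drift. With `a_t = S₀ + t * C`, the inequality
`log x ≤ x - 1` at `x = a_{t+1} / a_t` bounds each increment `log a_{t+1} - log a_t` above by
`C / a_t`.
-/

theorem integral_le_integral_of_le_condExp {Ω : Type*} {m m0 : MeasurableSpace Ω}
    {P : Measure Ω} (hm : m ≤ m0) [SigmaFinite (P.trim hm)] {f g : Ω → ℝ}
    (hf : Integrable f P) (hfg : f ≤ᵐ[P] P[g | m]) :
    ∫ ω, f ω ∂P ≤ ∫ ω, g ω ∂P :=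
  calc ∫ ω, f ω ∂P ≤ ∫ ω, (P[g | m]) ω ∂P := integral_mono_ae hf integrable_condExp hfg
    _ = ∫ ω, g ω ∂P := integral_condExp hm

theorem sum_integral_le_integral_sub_integral_of_add_le_condExp {Ω : Type*}
    {m0 : MeasurableSpace Ω} {P : Measure Ω} {m : ℕ → MeasurableSpace Ω} (hm : ∀ t, m t ≤ m0)
    [∀ t, SigmaFinite (P.trim (hm t))] {T : ℕ} {p d : ℕ → Ω → ℝ}
    (hp : ∀ t < T, Integrable (p t) P) (hd : ∀ t < T, Integrable (d t) P)
    (hdrift : ∀ t < T, p t + d t ≤ᵐ[P] P[p (t + 1) | m t]) :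
    ∑ t ∈ range T, ∫ ω, d t ω ∂P ≤ ∫ ω, p T ω ∂P - ∫ ω, p 0 ω ∂P := by
  rw [← sum_range_sub (fun t ↦ ∫ ω, p t ω ∂P)]
  refine sum_le_sum fun t ht ↦ ?_
  have ht : t < T := mem_range.mp ht
  rw [le_sub_iff_add_le', ← integral_add (hp t ht) (hd t ht)]
  exact integral_le_integral_of_le_condExp (hm t) ((hp t ht).add (hd t ht)) (hdrift t ht)

theorem log_div_le_sum_range_sub_div {a : ℕ → ℝ} (ha : ∀ i, 0 < a i) (n : ℕ) :
    Real.log (a n / a 0) ≤ ∑ i ∈ range n, (a (i + 1) - a i) / a i := by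
  rw [Real.log_div (ha n).ne' (ha 0).ne', ← sum_range_sub (fun i ↦ Real.log (a i))]
  refine sum_le_sum fun i _ ↦ ?_
  calc Real.log (a (i + 1)) - Real.log (a i)
      = Real.log (a (i + 1) / a i) := (Real.log_div (ha _).ne' (ha i).ne').symm
    _ ≤ a (i + 1) / a i - 1 := Real.log_le_sub_one_of_pos (div_pos (ha _) (ha i))
    _ = (a (i + 1) - a i) / a i := by rw [sub_div, div_self (ha i).ne']

theorem sum_Icc_one_eq_sum_range {M : Type*} [AddCommMonoid M] (f : ℕ → M) (n : ℕ) :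
    ∑ t ∈ Icc 1 n, f t = ∑ t ∈ range n, f (t + 1) := by
  rw [range_eq_Ico, sum_Ico_add' f 0 n 1, zero_add, Ico_add_one_right_eq_Icc]

theorem log_div_le_mul_sum_one_div {S C : ℝ} (hSC : 0 < S + C) (hC : 0 ≤ C) (n : ℕ) :
    Real.log ((S + ((n : ℝ) + 1) * C) / (S + C))
      ≤ C * ∑ t ∈ Icc 1 n, 1 / (S + (t : ℝ) * C) := by
  have hpos (i : ℕ) : 0 < S + ((i : ℝ) + 1) * C := by
    linarith [mul_nonneg i.cast_nonneg hC]
  have hlog := log_div_le_sum_range_sub_div hpos n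
  rw [sum_Icc_one_eq_sum_range, mul_sum]
  convert hlog using 3 with i
  · simp
  · push_cast
    ring

theorem accumulated_drift_general
    {Ω : Type*} {m0 : MeasurableSpace Ω} (P : Measure Ω) [IsProbabilityMeasure P]
    (m : ℕ → MeasurableSpace Ω) (hm : ∀ t, m t ≤ m0) (T : ℕ)
    (p : ℕ → Ω → ℝ) (hp : ∀ t ≤ T, Integrable (p t) P)
    (S₀ C μ : ℝ) (hSC : 0 < S₀ + C) (hC : 0 < C) (hμ : 0 ≤ μ)
    (hdrift : ∀ t, 1 ≤ t → t ≤ T →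
      ∀ᵐ ω ∂P, p (t - 1) ω + μ / (S₀ + (t : ℝ) * C) ≤ (P[p t | m (t - 1)]) ω) :
    (∫ ω, p 0 ω ∂P) + μ * ∑ t ∈ Icc 1 T, 1 / (S₀ + (t : ℝ) * C) ≤ ∫ ω, p T ω ∂P
    ∧ (∫ ω, p 0 ω ∂P) + (μ / C) * Real.log ((S₀ + ((T : ℝ) + 1) * C) / (S₀ + C))
        ≤ (∫ ω, p 0 ω ∂P) + μ * ∑ t ∈ Icc 1 T, 1 / (S₀ + (t : ℝ) * C) := by
  have (t : ℕ) : SigmaFinite (P.trim (hm t)) := inferInstance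
  constructor
  · have hsum := sum_integral_le_integral_sub_integral_of_add_le_condExp (P := P) hm
      (d := fun t _ ↦ μ / (S₀ + ((t + 1 : ℕ) : ℝ) * C)) (fun t ht ↦ hp t ht.le)
      (fun _ _ ↦ integrable_const _) (fun t ht ↦ hdrift (t + 1) t.succ_pos ht)
    simp only [integral_const, probReal_univ, one_smul] at hsum
    simp only [sum_Icc_one_eq_sum_range, mul_sum, mul_one_div]
    exact le_sub_iff_add_le'.mp hsum
  · refine add_le_add le_rfl ?_
    calc μ / C * Real.log ((S₀ + ((T : ℝ) + 1) * C) / (S₀ + C))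
        ≤ μ / C * (C * ∑ t ∈ Icc 1 T, 1 / (S₀ + (t : ℝ) * C)) := by
          gcongr
          exact log_div_le_mul_sum_one_div hSC hC.le T
      _ = μ * ∑ t ∈ Icc 1 T, 1 / (S₀ + (t : ℝ) * C) := by
          rw [← mul_assoc, div_mul_cancel₀ μ hC.ne']

/-- Accumulated drift and diminishing returns: iterating the one-step conditional
drift bound yields a harmonic-sum lower bound on `E[p_T]`, which is in turn lower
bounded by a logarithmic term. -/
theorem accumulated_drift
    {Ω : Type*} {m0 : MeasurableSpace Ω}
    (P : Measure Ω) [IsProbabilityMeasure P]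
    (ℱ : Filtration ℕ m0)
    (T : ℕ)
    (p : ℕ → Ω → ℝ) (hadapted : StronglyAdapted ℱ p)
    (hbdd : ∀ t, t ≤ T → ∀ ω, p t ω ∈ Set.Icc (0 : ℝ) 1)
    (S₀ C μ : ℝ) (hS₀ : 0 < S₀) (hC : 0 < C) (hμ : 0 ≤ μ)
    (hdrift : ∀ t, 1 ≤ t → t ≤ T →
      ∀ᵐ ω ∂P, p (t - 1) ω + μ / (S₀ + (t : ℝ) * C) ≤ (P[p t | ℱ (t - 1)]) ω) :
    (∫ ω, p 0 ω ∂P) + μ * ∑ t ∈ Finset.Icc 1 T, 1 / (S₀ + (t : ℝ) * C)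
        ≤ ∫ ω, p T ω ∂P
    ∧ (∫ ω, p 0 ω ∂P) + (μ / C) * Real.log ((S₀ + ((T : ℝ) + 1) * C) / (S₀ + C))
        ≤ (∫ ω, p 0 ω ∂P) + μ * ∑ t ∈ Finset.Icc 1 T, 1 / (S₀ + (t : ℝ) * C) :=
  have hp (t : ℕ) (ht : t ≤ T) : Integrable (p t) P :=
    .of_mem_Icc 0 1 ((hadapted t).mono (ℱ.le t)).measurable.aemeasurable (.of_forall (hbdd t ht))
  accumulated_drift_general P ℱ ℱ.le T p hp S₀ C μ (add_pos hS₀ hC) hC hμ hdrift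
end

section
/- Let K ≥ 2 and N ≥ 1 be integers, and let Y_1, …, Y_N be random variables on a probability space taking values in {1, …, K}, each with the same marginal distribution p ∈ Δ^K, where p_k ∈ (0,1) for all k and Δ := p_1 − max_{j≠1} p_j > 0. Let ρ ∈ [0,1] satisfy Cov(1{Y_a = k}, 1{Y_b = k}) ≤ ρ · p_k(1 − p_k) for all k ∈ {1, …, K} and all a ≠ b. Define the empirical distribution p̂_k = (1/N) ∑_{n=1}^N 1{Y_n = k}. Then P(∃ j ≠ 1 such that p̂_j ≥ p̂_1) ≤ K·(1 + (N−1)·ρ) / (N·Δ²). -/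
open MeasureTheory ProbabilityTheory Finset

/-! If the plurality vote prefers `j` to the correct answer `c`, the two frequencies have together
moved by at least the gap `Δ`, so the squared distance from the empirical distribution to `p` is at
least `Δ ^ 2 / 2`. The mean of that squared distance is the sum of the variances of the frequencies.
Expanding each variance into pairwise covariances bounds it by `(1 + (N - 1) * ρ) / N` times the
variance `p k * (1 - p k)` of a single vote, and Markov's inequality finishes the argument. -/

section Chebyshev

variable {Ω ι : Type*} [MeasurableSpace Ω] {μ : Measure Ω} [IsFiniteMeasure μ] [Fintype ι]

theorem variance_average_le [Nonempty ι] {X : ι → Ω → ℝ} (hX : ∀ i, MemLp (X i) 2 μ) {v ρ : ℝ}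
    (hvar : ∀ i, Var[X i; μ] ≤ v) (hcov : ∀ i j, i ≠ j → cov[X i, X j; μ] ≤ ρ * v) :
    Var[fun ω ↦ (1 / (Fintype.card ι : ℝ)) * ∑ i, X i ω; μ] ≤
      v * ((1 + ((Fintype.card ι : ℝ) - 1) * ρ) / Fintype.card ι) := by
  classical
  have hcard : (Fintype.card ι : ℝ) ≠ 0 := Nat.cast_ne_zero.mpr Fintype.card_ne_zero
  have hcov_le (i j : ι) : cov[X i, X j; μ] ≤ ρ * v + if i = j then v - ρ * v else 0 := by
    split_ifs with hij
    · subst hij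
      simpa only [covariance_self (hX i).aemeasurable, add_sub_cancel] using hvar i
    · simpa only [add_zero] using hcov i j hij
  calc Var[fun ω ↦ (1 / (Fintype.card ι : ℝ)) * ∑ i, X i ω; μ]
      = (1 / (Fintype.card ι : ℝ)) ^ 2 * ∑ i, ∑ j, cov[X i, X j; μ] := by
        rw [variance_const_mul, variance_fun_sum hX]
    _ ≤ (1 / (Fintype.card ι : ℝ)) ^ 2 *
          ∑ i, ∑ j, (ρ * v + if i = j then v - ρ * v else 0) := by
        gcongr with i _ j _
        exact hcov_le i j
    _ = v * ((1 + ((Fintype.card ι : ℝ) - 1) * ρ) / Fintype.card ι) := by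
        simp only [sum_add_distrib, sum_const, sum_ite_eq, mem_univ, if_true, card_univ,
          nsmul_eq_mul]
        field_simp
        ring

theorem measureReal_le_sum_sq_sub_integral_le {X : ι → Ω → ℝ} (hX : ∀ i, MemLp (X i) 2 μ) {c : ℝ}
    (hc : 0 < c) :
    μ.real {ω | c ≤ ∑ i, (X i ω - μ[X i]) ^ 2} ≤ (∑ i, Var[X i; μ]) / c := by
  have hint (i : ι) : Integrable (fun ω ↦ (X i ω - μ[X i]) ^ 2) μ :=
    ((hX i).sub (memLp_const _)).integrable_sq
  have hmarkov := mul_meas_ge_le_integral_of_nonneg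
    (.of_forall fun ω ↦ sum_nonneg fun i _ ↦ sq_nonneg (X i ω - μ[X i]))
    (integrable_finsetSum univ fun i _ ↦ hint i) c
  rw [integral_finsetSum univ fun i _ ↦ hint i] at hmarkov
  simp only [← variance_eq_integral (hX _).aemeasurable] at hmarkov
  rwa [le_div_iff₀' hc]

theorem sq_gap_div_two_le_sum_sq_sub {p q : ι → ℝ} {c j : ι} {Δ : ℝ} (hΔ : 0 ≤ Δ) (hjc : j ≠ c)
    (hp : p j + Δ ≤ p c) (hq : q c ≤ q j) : Δ ^ 2 / 2 ≤ ∑ i, (q i - p i) ^ 2 := by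
  classical
  calc Δ ^ 2 / 2
      ≤ ((q j - p j) + (p c - q c)) ^ 2 / 2 := by gcongr; linarith
    _ ≤ (q j - p j) ^ 2 + (q c - p c) ^ 2 := by
        linarith [add_sq_le (a := q j - p j) (b := p c - q c), sub_sq_comm (p c) (q c)]
    _ = ∑ i ∈ {j, c}, (q i - p i) ^ 2 :=
        (sum_pair (f := fun i ↦ (q i - p i) ^ 2) hjc).symm
    _ ≤ ∑ i, (q i - p i) ^ 2 :=
        sum_le_sum_of_subset_of_nonneg (subset_univ _) fun _ _ _ ↦ sq_nonneg _

theorem measureReal_exists_ne_le_of_integral_gap {X : ι → Ω → ℝ} (hX : ∀ i, MemLp (X i) 2 μ)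
    {c : ι} {Δ : ℝ} (hΔ : 0 < Δ) (hgap : ∀ j, j ≠ c → μ[X j] + Δ ≤ μ[X c]) :
    μ.real {ω | ∃ j, j ≠ c ∧ X c ω ≤ X j ω} ≤ 2 * (∑ i, Var[X i; μ]) / Δ ^ 2 :=
  calc μ.real {ω | ∃ j, j ≠ c ∧ X c ω ≤ X j ω}
      ≤ μ.real {ω | Δ ^ 2 / 2 ≤ ∑ i, (X i ω - μ[X i]) ^ 2} :=
        measureReal_mono fun _ ⟨j, hjc, hle⟩ ↦
          sq_gap_div_two_le_sum_sq_sub (p := fun i ↦ μ[X i]) hΔ.le hjc (hgap j hjc) hle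
    _ ≤ (∑ i, Var[X i; μ]) / (Δ ^ 2 / 2) :=
        measureReal_le_sum_sq_sub_integral_le hX (by positivity)
    _ = 2 * (∑ i, Var[X i; μ]) / Δ ^ 2 := by field_simp

end Chebyshev

theorem two_mul_sum_mul_one_sub_le_card {α : Type*} [Fintype α] (p : α → ℝ) :
    2 * ∑ k, p k * (1 - p k) ≤ Fintype.card α := by
  rw [mul_sum, ← card_univ, ← nsmul_one]
  exact sum_le_card_nsmul univ _ 1 fun k _ ↦ by nlinarith [sq_nonneg (p k - 1 / 2)]

section Voting

variable {Ω ι α : Type*} [DecidableEq α]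

/-- The indicator `1{Y = k}` of the event that the random answer `Y` equals `k`, as a real random
variable. -/
def answerIndicator (Y : Ω → α) (k : α) (ω : Ω) : ℝ :=
  if Y ω = k then 1 else 0

theorem answerIndicator_eq_indicator (Y : Ω → α) (k : α) :
    answerIndicator Y k = (Y ⁻¹' {k}).indicator 1 := by
  classical
  ext ω
  simp only [answerIndicator, Set.indicator_apply, Set.mem_preimage, Set.mem_singleton_iff,
    Pi.one_apply]

/-- The empirical frequency of the answer `k`: the fraction of the agents `ι`, answering `Y`, that
give the answer `k`. It is `0` when there are no agents. -/
noncomputable def empiricalFreq [Fintype ι] (Y : ι → Ω → α) (k : α) (ω : Ω) : ℝ :=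
  (1 / (Fintype.card ι : ℝ)) * ∑ n, answerIndicator (Y n) k ω

variable [MeasurableSpace Ω] {μ : Measure Ω} [MeasurableSpace α] [MeasurableSingletonClass α]

theorem memLp_answerIndicator [IsFiniteMeasure μ] {Y : Ω → α} (hY : Measurable Y) (k : α)
    (q : ENNReal) : MemLp (answerIndicator Y k) q μ := by
  rw [answerIndicator_eq_indicator]
  exact (memLp_const 1).indicator (hY (measurableSet_singleton k))

theorem integral_answerIndicator {Y : Ω → α} (hY : Measurable Y) (k : α) :
    μ[answerIndicator Y k] = μ.real {ω | Y ω = k} := by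
  rw [answerIndicator_eq_indicator]
  exact integral_indicator_one (hY (measurableSet_singleton k))

theorem variance_answerIndicator [IsProbabilityMeasure μ] {Y : Ω → α} (hY : Measurable Y) (k : α) :
    Var[answerIndicator Y k; μ] = μ.real {ω | Y ω = k} * (1 - μ.real {ω | Y ω = k}) := by
  have hsq : answerIndicator Y k ^ 2 = answerIndicator Y k := by
    ext ω
    simp [answerIndicator]
  rw [variance_eq_sub (memLp_answerIndicator hY k 2), hsq, integral_answerIndicator hY]
  ring

variable [Fintype ι]

theorem memLp_empiricalFreq [IsFiniteMeasure μ] {Y : ι → Ω → α} (hY : ∀ n, Measurable (Y n))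
    (k : α) (q : ENNReal) : MemLp (empiricalFreq Y k) q μ :=
  (memLp_finsetSum univ fun n _ ↦ memLp_answerIndicator (hY n) k q).const_mul _

theorem integral_empiricalFreq [IsFiniteMeasure μ] [Nonempty ι] {Y : ι → Ω → α}
    (hY : ∀ n, Measurable (Y n)) {k : α} {r : ℝ} (hmarg : ∀ n, μ.real {ω | Y n ω = k} = r) :
    μ[empiricalFreq Y k] = r := by
  have hcard : (Fintype.card ι : ℝ) ≠ 0 := Nat.cast_ne_zero.mpr Fintype.card_ne_zero
  have hint (n : ι) : Integrable (answerIndicator (Y n) k) μ :=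
    memLp_one_iff_integrable.mp (memLp_answerIndicator (hY n) k 1)
  simp only [empiricalFreq]
  rw [integral_const_mul, integral_finsetSum univ fun n _ ↦ hint n]
  simp only [integral_answerIndicator (hY _), hmarg, sum_const, card_univ, nsmul_eq_mul]
  field_simp

theorem variance_empiricalFreq_le [IsProbabilityMeasure μ] [Nonempty ι] {Y : ι → Ω → α}
    (hY : ∀ n, Measurable (Y n)) {k : α} {r ρ : ℝ} (hmarg : ∀ n, μ.real {ω | Y n ω = k} = r)
    (hcov : ∀ a b, a ≠ b →
      cov[answerIndicator (Y a) k, answerIndicator (Y b) k; μ] ≤ ρ * (r * (1 - r))) :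
    Var[empiricalFreq Y k; μ] ≤
      r * (1 - r) * ((1 + ((Fintype.card ι : ℝ) - 1) * ρ) / Fintype.card ι) :=
  variance_average_le (fun n ↦ memLp_answerIndicator (hY n) k 2)
    (fun n ↦ by rw [variance_answerIndicator (hY n), hmarg]) hcov

theorem correlated_majority_vote_error_bound_general [IsProbabilityMeasure μ] [Nonempty ι]
    [Fintype α] {Y : ι → Ω → α} (hY : ∀ n, Measurable (Y n)) {p : α → ℝ}
    (hmarg : ∀ n k, μ.real {ω | Y n ω = k} = p k) {c : α} {Δ : ℝ} (hΔ : 0 < Δ)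
    (hgap : ∀ j, j ≠ c → p j + Δ ≤ p c) {ρ : ℝ}
    (hcov : ∀ k a b, a ≠ b →
      cov[answerIndicator (Y a) k, answerIndicator (Y b) k; μ] ≤ ρ * (p k * (1 - p k))) :
    μ.real {ω | ∃ j, j ≠ c ∧ empiricalFreq Y c ω ≤ empiricalFreq Y j ω} ≤
      2 * (∑ k, p k * (1 - p k)) * (1 + ((Fintype.card ι : ℝ) - 1) * ρ) /
        (Fintype.card ι * Δ ^ 2) := by
  have hmean (k : α) : μ[empiricalFreq Y k] = p k := integral_empiricalFreq hY (hmarg · k)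
  calc μ.real {ω | ∃ j, j ≠ c ∧ empiricalFreq Y c ω ≤ empiricalFreq Y j ω}
      ≤ 2 * (∑ k, Var[empiricalFreq Y k; μ]) / Δ ^ 2 :=
        measureReal_exists_ne_le_of_integral_gap (memLp_empiricalFreq hY · 2) hΔ
          (by simpa only [hmean] using hgap)
    _ ≤ 2 * (∑ k, p k * (1 - p k) *
          ((1 + ((Fintype.card ι : ℝ) - 1) * ρ) / Fintype.card ι)) / Δ ^ 2 := by
        gcongr with k
        exact variance_empiricalFreq_le hY (hmarg · k) (hcov k)
    _ = 2 * (∑ k, p k * (1 - p k)) * (1 + ((Fintype.card ι : ℝ) - 1) * ρ) /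
          (Fintype.card ι * Δ ^ 2) := by
        rw [← sum_mul]
        field_simp

end Voting

/-- Correlation shrinks the effective ensemble size: tail bound on the probability
that the plurality vote is not the correct answer. Answer `1` in the paper
corresponds to index `⟨0, _⟩ : Fin K` here. -/
theorem correlated_majority_vote_error_bound
    {Ω : Type*} [MeasureSpace Ω] [IsProbabilityMeasure (ℙ : Measure Ω)]
    {K N : ℕ} (hK : 2 ≤ K) (hN : 1 ≤ N)
    (Y : Fin N → Ω → Fin K) (hY : ∀ n, Measurable (Y n))
    (p : Fin K → ℝ)
    (hp0 : ∀ k, 0 < p k) (hp1 : ∀ k, p k < 1) (hpsum : ∑ k, p k = 1)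
    (hmarg : ∀ n k, (ℙ {ω | Y n ω = k}).toReal = p k)
    (Δ : ℝ)
    (hΔ : Δ = p ⟨0, by omega⟩ -
      (Finset.univ.erase (⟨0, by omega⟩ : Fin K)).sup'
        ⟨⟨1, by omega⟩, Finset.mem_erase.mpr ⟨by simp [Fin.ext_iff], Finset.mem_univ _⟩⟩ p)
    (hΔpos : 0 < Δ)
    (ρ : ℝ) (hρ : ρ ∈ Set.Icc (0 : ℝ) 1)
    (hcov : ∀ k : Fin K, ∀ a b : Fin N, a ≠ b →
      (∫ ω, (if Y a ω = k then (1 : ℝ) else 0) * (if Y b ω = k then (1 : ℝ) else 0))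
        - (∫ ω, (if Y a ω = k then (1 : ℝ) else 0)) *
          (∫ ω, (if Y b ω = k then (1 : ℝ) else 0))
      ≤ ρ * (p k * (1 - p k))) :
    (ℙ {ω | ∃ j : Fin K, j ≠ (⟨0, by omega⟩ : Fin K) ∧
        (1 / (N : ℝ)) * ∑ n, (if Y n ω = (⟨0, by omega⟩ : Fin K) then (1 : ℝ) else 0)
          ≤ (1 / (N : ℝ)) * ∑ n, (if Y n ω = j then (1 : ℝ) else 0)}).toReal
      ≤ K * (1 + ((N : ℝ) - 1) * ρ) / (N * Δ ^ 2) := by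
  have : Nonempty (Fin N) := ⟨⟨0, hN⟩⟩
  have hgap (j : Fin K) (hj : j ≠ ⟨0, by omega⟩) : p j + Δ ≤ p ⟨0, by omega⟩ := by
    linarith [le_sup' p (mem_erase.mpr ⟨hj, mem_univ j⟩)]
  have hcov' (k : Fin K) (a b : Fin N) (hab : a ≠ b) :
      cov[answerIndicator (Y a) k, answerIndicator (Y b) k] ≤ ρ * (p k * (1 - p k)) := by
    rw [covariance_eq_sub (memLp_answerIndicator (hY a) k 2) (memLp_answerIndicator (hY b) k 2)]
    exact hcov k a b hab
  have hbound := correlated_majority_vote_error_bound_general hY hmarg hΔpos hgap hcov'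
  simp only [empiricalFreq, answerIndicator, Fintype.card_fin] at hbound
  have hinflation : 0 ≤ 1 + ((N : ℝ) - 1) * ρ :=
    add_nonneg zero_le_one (mul_nonneg (sub_nonneg.mpr (mod_cast hN)) hρ.1)
  refine hbound.trans ?_
  gcongr
  simpa only [Fintype.card_fin] using two_mul_sum_mul_one_sub_le_card p
end

section
/- Let K ≥ 1 and N ≥ 1 be integers, and let Y_1, …, Y_N be random variables on a probability space taking values in {1, …, K}, each with the same marginal distribution p ∈ Δ^K. Suppose ρ ∈ [0,1] satisfies Cov(1{Y_a = k}, 1{Y_b = k}) ≤ ρ · p_k(1 − p_k) for all k ∈ {1, …, K} and all a ≠ b. Let p̂_k = (1/N) ∑_{n=1}^N 1{Y_n = k} and let Δ > 0. Then P(∑_{k=1}^K |p̂_k − p_k| ≥ Δ) ≤ K·(1 + (N−1)·ρ)/(N·Δ²). -/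
open MeasureTheory ProbabilityTheory Finset

/-!
The vector `p̂` has mean `p`, so Cauchy–Schwarz (`‖v‖₁² ≤ K ‖v‖₂²`) and Markov's inequality for
`‖p̂ - p‖₂²` reduce the tail bound to `∑ₖ Var p̂ₖ`. In `Var (∑ₙ 1{Yₙ = k})` the `N` diagonal terms
equal `pₖ (1 - pₖ)` and each of the `N (N - 1)` others is at most `ρ` times that; summing over
`k` costs only `∑ₖ pₖ (1 - pₖ) ≤ 1`.
-/

section RealRandomVariables

variable {Ω ι : Type*} {mΩ : MeasurableSpace Ω} {μ : Measure Ω} [IsFiniteMeasure μ]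
  {s : Finset ι} {X : ι → Ω → ℝ}

theorem variance_sum_le_of_covariance_le {v ρ : ℝ} (hX : ∀ i ∈ s, MemLp (X i) 2 μ)
    (hvar : ∀ i ∈ s, Var[X i; μ] ≤ v)
    (hcov : ∀ i ∈ s, ∀ j ∈ s, i ≠ j → cov[X i, X j; μ] ≤ ρ * v) :
    Var[fun ω ↦ ∑ i ∈ s, X i ω; μ] ≤ #s * (1 + (#s - 1) * ρ) * v := by
  classical
  have row_le (i : ι) (hi : i ∈ s) :
      ∑ j ∈ s, cov[X i, X j; μ] ≤ (1 + (#s - 1) * ρ) * v := by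
    have diagonal_le : cov[X i, X i; μ] ≤ v :=
      (covariance_self (hX i hi).aemeasurable).trans_le (hvar i hi)
    have off_diagonal_le : ∑ j ∈ s.erase i, cov[X i, X j; μ] ≤ (#s - 1) * (ρ * v) := by
      rw [← cast_card_erase_of_mem hi, ← nsmul_eq_mul]
      exact sum_le_card_nsmul _ _ _ fun j hj ↦
        hcov i hi j (mem_of_mem_erase hj) (ne_of_mem_erase hj).symm
    rw [← add_sum_erase s _ hi]
    linarith
  calc Var[fun ω ↦ ∑ i ∈ s, X i ω; μ]
      = ∑ i ∈ s, ∑ j ∈ s, cov[X i, X j; μ] := variance_fun_sum' hX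
    _ ≤ #s • ((1 + (#s - 1) * ρ) * v) := sum_le_card_nsmul _ _ _ row_le
    _ = #s * (1 + (#s - 1) * ρ) * v := by rw [nsmul_eq_mul, mul_assoc]

theorem variance_average_le_of_covariance_le {v ρ : ℝ} (hX : ∀ i ∈ s, MemLp (X i) 2 μ)
    (hvar : ∀ i ∈ s, Var[X i; μ] ≤ v)
    (hcov : ∀ i ∈ s, ∀ j ∈ s, i ≠ j → cov[X i, X j; μ] ≤ ρ * v) :
    Var[fun ω ↦ 1 / (#s : ℝ) * ∑ i ∈ s, X i ω; μ] ≤ (1 + (#s - 1) * ρ) / #s * v := by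
  calc Var[fun ω ↦ 1 / (#s : ℝ) * ∑ i ∈ s, X i ω; μ]
      = (1 / (#s : ℝ)) ^ 2 * Var[fun ω ↦ ∑ i ∈ s, X i ω; μ] := variance_const_mul ..
    _ ≤ (1 / (#s : ℝ)) ^ 2 * (#s * (1 + (#s - 1) * ρ) * v) := by
        gcongr
        exact variance_sum_le_of_covariance_le hX hvar hcov
    _ = (1 + (#s - 1) * ρ) / #s * v := by field_simp

theorem measureReal_sum_abs_sub_integral_ge_le_sum_variance {c : ℝ} (hX : ∀ i ∈ s, MemLp (X i) 2 μ)
    (hc : 0 < c) :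
    μ.real {ω | c ≤ ∑ i ∈ s, |X i ω - μ[X i]|} ≤ #s * (∑ i ∈ s, Var[X i; μ]) / c ^ 2 := by
  have integrable_sq (i : ι) (hi : i ∈ s) : Integrable (fun ω ↦ (X i ω - μ[X i]) ^ 2) μ :=
    ((hX i hi).sub (memLp_const _)).integrable_sq
  have event_subset : {ω | c ≤ ∑ i ∈ s, |X i ω - μ[X i]|} ⊆
      {ω | c ^ 2 ≤ #s * ∑ i ∈ s, (X i ω - μ[X i]) ^ 2} := fun ω hω ↦
    calc c ^ 2 ≤ (∑ i ∈ s, |X i ω - μ[X i]|) ^ 2 := pow_le_pow_left₀ hc.le hω 2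
      _ ≤ #s * ∑ i ∈ s, |X i ω - μ[X i]| ^ 2 := sq_sum_le_card_mul_sum_sq
      _ = #s * ∑ i ∈ s, (X i ω - μ[X i]) ^ 2 := by simp only [sq_abs]
  rw [le_div_iff₀' (by positivity)]
  calc c ^ 2 * μ.real {ω | c ≤ ∑ i ∈ s, |X i ω - μ[X i]|}
      ≤ c ^ 2 * μ.real {ω | c ^ 2 ≤ #s * ∑ i ∈ s, (X i ω - μ[X i]) ^ 2} := by
        gcongr ?_ * ?_
        exact measureReal_mono event_subset
    _ ≤ ∫ ω, (#s : ℝ) * ∑ i ∈ s, (X i ω - μ[X i]) ^ 2 ∂μ :=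
        mul_meas_ge_le_integral_of_nonneg (ae_of_all _ fun ω ↦ by positivity)
          ((integrable_finsetSum _ integrable_sq).const_mul _) _
    _ = #s * ∑ i ∈ s, Var[X i; μ] := by
        rw [integral_const_mul, integral_finsetSum _ integrable_sq]
        congr 1
        exact sum_congr rfl fun i hi ↦ (variance_eq_integral (hX i hi).aemeasurable).symm

end RealRandomVariables

section Indicators

variable {Ω : Type*} {mΩ : MeasurableSpace Ω} {μ : Measure Ω} {A : Set Ω}

theorem memLp_indicator_one [IsFiniteMeasure μ] (hA : MeasurableSet A) (q : ENNReal) :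
    MemLp (A.indicator (1 : Ω → ℝ)) q μ :=
  memLp_indicator_const q hA 1 (.inr (measure_ne_top μ A))

theorem variance_indicator_one [IsProbabilityMeasure μ] (hA : MeasurableSet A) :
    Var[A.indicator (1 : Ω → ℝ); μ] = μ.real A * (1 - μ.real A) := by
  have indicator_sq : A.indicator (1 : Ω → ℝ) ^ 2 = A.indicator 1 := by
    ext ω
    by_cases hω : ω ∈ A <;> simp [hω]
  rw [variance_eq_sub (memLp_indicator_one hA 2), indicator_sq, integral_indicator_one hA]
  ring

end Indicators

section EmpiricalFrequency

variable {Ω ι α : Type*} [Fintype ι]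

/-- The empirical frequency `p̂ₖ` of the value `k` in the sample `(Yₙ)`, as a random variable. It is
`0` for an empty sample. -/
noncomputable def empiricalFrequency (Y : ι → Ω → α) (k : α) (ω : Ω) : ℝ :=
  1 / (Fintype.card ι : ℝ) * ∑ n, (Y n ⁻¹' {k}).indicator 1 ω

variable {mΩ : MeasurableSpace Ω} {μ : Measure Ω} [MeasurableSpace α] [MeasurableSingletonClass α]
  {Y : ι → Ω → α} {p : α → ℝ}

theorem memLp_empiricalFrequency [IsFiniteMeasure μ] (hY : ∀ n, Measurable (Y n)) (k : α)
    (q : ENNReal) : MemLp (empiricalFrequency Y k) q μ :=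
  (memLp_finsetSum _ fun n _ ↦
    memLp_indicator_one (hY n (measurableSet_singleton k)) q).const_mul _

theorem integral_empiricalFrequency [IsFiniteMeasure μ] [Nonempty ι]
    (hY : ∀ n, Measurable (Y n)) {k : α} {r : ℝ} (hr : ∀ n, μ.real (Y n ⁻¹' {k}) = r) :
    μ[empiricalFrequency Y k] = r := by
  have measurableSet_eq (n : ι) : MeasurableSet (Y n ⁻¹' {k}) := hY n (measurableSet_singleton k)
  have mean_eq (n : ι) : ∫ ω, (Y n ⁻¹' {k}).indicator 1 ω ∂μ = r :=
    (integral_indicator_one (measurableSet_eq n)).trans (hr n)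
  simp only [empiricalFrequency]
  rw [integral_const_mul, integral_finsetSum _ fun n _ ↦
    (memLp_indicator_one (measurableSet_eq n) 1).integrable le_rfl]
  simp [mean_eq]

theorem sum_mul_one_sub_le_one_of_marginal [IsProbabilityMeasure μ] {Z : Ω → α} (hZ : Measurable Z)
    {s : Finset α} (hp : ∀ k ∈ s, μ.real (Z ⁻¹' {k}) = p k) :
    ∑ k ∈ s, p k * (1 - p k) ≤ 1 :=
  calc ∑ k ∈ s, p k * (1 - p k)
      ≤ ∑ k ∈ s, p k := sum_le_sum fun k _ ↦ by linarith [mul_self_nonneg (p k)]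
    _ = ∑ k ∈ s, μ.real (Z ⁻¹' {k}) := sum_congr rfl fun k hk ↦ (hp k hk).symm
    _ = μ.real (Z ⁻¹' s) :=
        sum_measureReal_preimage_singleton s fun k _ ↦ hZ (measurableSet_singleton k)
    _ ≤ 1 := measureReal_le_one

variable [IsProbabilityMeasure μ] {ρ : ℝ}

theorem variance_empiricalFrequency_le (hY : ∀ n, Measurable (Y n)) {k : α} {r : ℝ}
    (hr : ∀ n, μ.real (Y n ⁻¹' {k}) = r)
    (hcov : ∀ a b, a ≠ b → cov[(Y a ⁻¹' {k}).indicator 1, (Y b ⁻¹' {k}).indicator 1; μ]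
      ≤ ρ * (r * (1 - r))) :
    Var[empiricalFrequency Y k; μ] ≤
      (1 + ((Fintype.card ι : ℝ) - 1) * ρ) / Fintype.card ι * (r * (1 - r)) := by
  have measurableSet_eq (n : ι) : MeasurableSet (Y n ⁻¹' {k}) := hY n (measurableSet_singleton k)
  refine variance_average_le_of_covariance_le
    (fun n _ ↦ memLp_indicator_one (measurableSet_eq n) 2) (fun n _ ↦ ?_)
    fun a _ b _ hab ↦ hcov a b hab
  rw [variance_indicator_one (measurableSet_eq n), hr n]

theorem sum_variance_empiricalFrequency_le [Nonempty ι] (hY : ∀ n, Measurable (Y n))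
    {s : Finset α} (hp : ∀ n, ∀ k ∈ s, μ.real (Y n ⁻¹' {k}) = p k) (hρ : 0 ≤ ρ)
    (hcov : ∀ k ∈ s, ∀ a b, a ≠ b →
      cov[(Y a ⁻¹' {k}).indicator 1, (Y b ⁻¹' {k}).indicator 1; μ] ≤ ρ * (p k * (1 - p k))) :
    ∑ k ∈ s, Var[empiricalFrequency Y k; μ] ≤
      (1 + ((Fintype.card ι : ℝ) - 1) * ρ) / Fintype.card ι := by
  set c : ℝ := (1 + ((Fintype.card ι : ℝ) - 1) * ρ) / Fintype.card ι
  have c_nonneg : 0 ≤ c := by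
    have one_le_card : (1 : ℝ) ≤ Fintype.card ι := by exact_mod_cast Fintype.card_pos (α := ι)
    have := mul_nonneg (sub_nonneg.2 one_le_card) hρ
    positivity
  calc ∑ k ∈ s, Var[empiricalFrequency Y k; μ]
      ≤ ∑ k ∈ s, c * (p k * (1 - p k)) := sum_le_sum fun k hk ↦
        variance_empiricalFrequency_le hY (fun n ↦ hp n k hk) (hcov k hk)
    _ = c * ∑ k ∈ s, p k * (1 - p k) := (mul_sum ..).symm
    _ ≤ c := mul_le_of_le_one_right c_nonneg <|
        sum_mul_one_sub_le_one_of_marginal (hY (Classical.arbitrary ι)) (hp _)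

theorem empirical_distribution_l1_tail_bound_general [Nonempty ι] (hY : ∀ n, Measurable (Y n))
    {s : Finset α} (hp : ∀ n, ∀ k ∈ s, μ.real (Y n ⁻¹' {k}) = p k) (hρ : 0 ≤ ρ)
    (hcov : ∀ k ∈ s, ∀ a b, a ≠ b →
      cov[(Y a ⁻¹' {k}).indicator 1, (Y b ⁻¹' {k}).indicator 1; μ] ≤ ρ * (p k * (1 - p k)))
    {Δ : ℝ} (hΔ : 0 < Δ) :
    μ.real {ω | Δ ≤ ∑ k ∈ s, |empiricalFrequency Y k ω - p k|} ≤
      #s * (1 + ((Fintype.card ι : ℝ) - 1) * ρ) / (Fintype.card ι * Δ ^ 2) := by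
  have sum_abs_eq (ω : Ω) : ∑ k ∈ s, |empiricalFrequency Y k ω - p k| =
      ∑ k ∈ s, |empiricalFrequency Y k ω - μ[empiricalFrequency Y k]| :=
    sum_congr rfl fun k hk ↦ by rw [integral_empiricalFrequency hY fun n ↦ hp n k hk]
  calc μ.real {ω | Δ ≤ ∑ k ∈ s, |empiricalFrequency Y k ω - p k|}
      ≤ #s * (∑ k ∈ s, Var[empiricalFrequency Y k; μ]) / Δ ^ 2 := by
        simp only [sum_abs_eq]
        exact measureReal_sum_abs_sub_integral_ge_le_sum_variance
          (fun k _ ↦ memLp_empiricalFrequency hY k 2) hΔ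
    _ ≤ #s * ((1 + ((Fintype.card ι : ℝ) - 1) * ρ) / Fintype.card ι) / Δ ^ 2 := by
        gcongr
        exact sum_variance_empiricalFrequency_le hY hp hρ hcov
    _ = #s * (1 + ((Fintype.card ι : ℝ) - 1) * ρ) / (Fintype.card ι * Δ ^ 2) := by
        rw [← mul_div_assoc, div_div]

end EmpiricalFrequency

/-- ℓ¹-deviation tail bound for the empirical answer distribution of `N`
identically distributed but possibly correlated agents. -/
theorem empirical_distribution_l1_tail_bound
    {Ω : Type*} [MeasureSpace Ω] [IsProbabilityMeasure (ℙ : Measure Ω)]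
    {K N : ℕ} (hK : 1 ≤ K) (hN : 1 ≤ N)
    (Y : Fin N → Ω → Fin K) (hY : ∀ n, Measurable (Y n))
    (p : Fin K → ℝ)
    (hpnn : ∀ k, 0 ≤ p k) (hpsum : ∑ k, p k = 1)
    (hmarg : ∀ n k, (ℙ {ω | Y n ω = k}).toReal = p k)
    (ρ : ℝ) (hρ : ρ ∈ Set.Icc (0 : ℝ) 1)
    (hcov : ∀ k : Fin K, ∀ a b : Fin N, a ≠ b →
      (∫ ω, (if Y a ω = k then (1 : ℝ) else 0) * (if Y b ω = k then (1 : ℝ) else 0))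
        - (∫ ω, (if Y a ω = k then (1 : ℝ) else 0)) *
          (∫ ω, (if Y b ω = k then (1 : ℝ) else 0))
      ≤ ρ * (p k * (1 - p k)))
    (Δ : ℝ) (hΔ : 0 < Δ) :
    (ℙ {ω | Δ ≤ ∑ k : Fin K,
        |(1 / (N : ℝ)) * ∑ n, (if Y n ω = k then (1 : ℝ) else 0) - p k|}).toReal
      ≤ K * (1 + ((N : ℝ) - 1) * ρ) / (N * Δ ^ 2) := by
  have : NeZero N := ⟨by lia⟩
  have covariance_le (k : Fin K) (a b : Fin N) (hab : a ≠ b) :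
      cov[(Y a ⁻¹' {k}).indicator 1, (Y b ⁻¹' {k}).indicator 1; ℙ] ≤ ρ * (p k * (1 - p k)) := by
    rw [covariance_eq_sub (memLp_indicator_one (hY a (measurableSet_singleton k)) 2)
      (memLp_indicator_one (hY b (measurableSet_singleton k)) 2)]
    simpa [Set.indicator] using hcov k a b hab
  simpa [empiricalFrequency, Set.indicator, measureReal_def] using
    empirical_distribution_l1_tail_bound_general hY (s := univ) (fun n k _ ↦ hmarg n k) hρ.1
      (fun k _ ↦ covariance_le k) hΔ
end
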